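/- For every integer m ≥ 1, the ideal I^{(m)} is generated in degrees at most lm: for every degree d ≥ lm one has (I^{(m)})_{d+1} = R_1 · (I^{(m)})_d, i.e. v_d(I^{(m)}) = 0 for all d > lm. -/

import Mathlib

open MvPolynomial Filter

/-- The degree-`d` homogeneous component of a homogeneous ideal `J ⊆ K[x,y,z]`,
as a `K`-vector subspace. -/
noncomputable def degComp {K : Type*} [Field K] (J : Ideal (MvPolynomial (Fin 3) K)) (d : ℕ) :
    Submodule K (MvPolynomial (Fin 3) K) :=
  Submodule.restrictScalars K J ⊓ homogeneousSubmodule (Fin 3) K d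

/-- `dim_K J_d`. -/
noncomputable def hdim {K : Type*} [Field K] (J : Ideal (MvPolynomial (Fin 3) K)) (d : ℕ) : ℕ :=
  Module.finrank K (degComp J d)

/-- The subspace `R_1 · J_{d-1}` of products of linear forms with degree-`(d-1)` elements. -/
noncomputable def oneGen {K : Type*} [Field K] (J : Ideal (MvPolynomial (Fin 3) K)) (d : ℕ) :
    Submodule K (MvPolynomial (Fin 3) K) :=
  Submodule.span K
    {x | ∃ f ∈ homogeneousSubmodule (Fin 3) K 1, ∃ g ∈ degComp J (d - 1), x = f * g}

/-- `v_d(J) = dim_K J_d / (R_1 · J_{d-1})`, the number of minimal generators of `J`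
in degree `d`. -/
noncomputable def vnum {K : Type*} [Field K] (J : Ideal (MvPolynomial (Fin 3) K)) (d : ℕ) : ℕ :=
  Module.finrank K
    (↥(degComp J d) ⧸ Submodule.comap (degComp J d).subtype (oneGen J d))

/-!
Choose coordinates so that the off-line point is `(1 : 0 : 0)` and the line is `x₀ = 0`, and expand
`F = ∑ x₀ ^ k * g_k (x₁, x₂)`. Let `Q` be the product of the `l` linear forms in `x₁, x₂` that cut
out the collinear points. Then `F ∈ I^{(m)}` if and only if every `g_k` lies in `(x₁, x₂) ^ m` and
is divisible by `Q ^ (m - k)`. So for `F` of degree `d + 1 > l * m` it is enough to treat a single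
term `x₀ ^ k * g_k`. If `k > m`, divide by one factor `x₀`, which changes neither condition. If
`k ≤ m`, the cofactor of `Q ^ (m - k)` in `g_k` has degree `d + 1 - k - l * (m - k) > 0`, so it is
a combination of products `u * v` with `u` linear; the forms `Q ^ (m - k) * v` have degree
`d - k ≥ l * m - m ≥ m`, which puts them in `(x₁, x₂) ^ m`.
-/

section GradedPieces

variable {σ R : Type*} [CommRing R]

/-- The degree-`d` component of an ideal of a polynomial ring in arbitrary variables; for three
variables it is `degComp`. -/
noncomputable def gradedPiece (J : Ideal (MvPolynomial σ R)) (d : ℕ) :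
    Submodule R (MvPolynomial σ R) :=
  J.restrictScalars R ⊓ homogeneousSubmodule σ R d

/-- The ideal `J` has no minimal generator of degree `d + 1`, that is `J_{d+1} = R_1 · J_d`; only
the inclusion that can fail is recorded. -/
def NoNewGenerator (J : Ideal (MvPolynomial σ R)) (d : ℕ) : Prop :=
  gradedPiece J (d + 1) ≤ homogeneousSubmodule σ R 1 * gradedPiece J d

lemma homogeneousSubmodule_one_mul_gradedPiece_le (J : Ideal (MvPolynomial σ R)) (d : ℕ) :
    homogeneousSubmodule σ R 1 * gradedPiece J d ≤ gradedPiece J (d + 1) := by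
  rw [Submodule.mul_le]
  rintro f hf g ⟨hgJ, hg⟩
  exact ⟨J.mul_mem_left f hgJ, add_comm 1 d ▸ IsHomogeneous.mul hf hg⟩

lemma exists_isHomogeneous_eq_mul_of_dvd {Q F : MvPolynomial σ R} {s n : ℕ}
    (hQ : Q.IsHomogeneous s) (hF : F.IsHomogeneous (s + n)) (hQF : Q ∣ F) :
    ∃ G : MvPolynomial σ R, G.IsHomogeneous n ∧ F = Q * G := by
  obtain ⟨G, rfl⟩ := hQF
  let := gradedAlgebra (σ := σ) (R := R)
  let G' := DirectSum.decompose (homogeneousSubmodule σ R) G n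
  refine ⟨G', G'.2, ?_⟩
  calc Q * G = DirectSum.decompose (homogeneousSubmodule σ R) (Q * G) (s + n) :=
        (DirectSum.decompose_of_mem_same _ hF).symm
    _ = Q * G' := DirectSum.coe_decompose_mul_add_of_left_mem _ hQ

lemma noNewGenerator_span_singleton {Q : MvPolynomial σ R} {s d : ℕ} (hQ : Q.IsHomogeneous s)
    (hsd : s ≤ d) : NoNewGenerator (Ideal.span {Q}) d := by
  obtain ⟨n, rfl⟩ := Nat.exists_eq_add_of_le hsd
  rintro F ⟨hQF, hF⟩
  obtain ⟨G, hG, rfl⟩ :=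
    exists_isHomogeneous_eq_mul_of_dvd (n := n + 1) hQ hF (Ideal.mem_span_singleton.1 hQF)
  have hG' : G ∈ homogeneousSubmodule σ R 1 * homogeneousSubmodule σ R n := by
    rwa [← homogeneousSubmodule_one_pow R n, ← pow_succ', homogeneousSubmodule_one_pow]
  have hle : homogeneousSubmodule σ R 1 * homogeneousSubmodule σ R n ≤
      (homogeneousSubmodule σ R 1 * gradedPiece (Ideal.span {Q}) (s + n)).comap
        (LinearMap.mulLeft R Q) := Submodule.mul_le.2 fun f hf g hg => by
    rw [Submodule.mem_comap, LinearMap.mulLeft_apply, mul_left_comm]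
    exact Submodule.mul_mem_mul hf
      ⟨Ideal.mul_mem_right g _ (Ideal.mem_span_singleton_self Q), hQ.mul hg⟩
  exact hle hG'

lemma mem_pow_idealOfVars_of_isHomogeneous {g : MvPolynomial σ R} {c m : ℕ}
    (hg : g.IsHomogeneous c) (hmc : m ≤ c) : g ∈ idealOfVars σ R ^ m := by
  rw [mem_pow_idealOfVars_iff']
  exact fun u hu => hg.coeff_eq_zero (by lia)

end GradedPieces

section PointIdeals

variable {σ R : Type*} [CommRing R]

/-- The homogeneous ideal of the projective point with coordinate vector `a`, encoded as the kernel
of the restriction `F ↦ F (t a)` to the line spanned by `a`. -/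
noncomputable def pointIdeal (a : σ → R) : Ideal (MvPolynomial σ R) :=
  RingHom.ker (aeval fun j => Polynomial.C (a j) * Polynomial.X :
    MvPolynomial σ R →ₐ[R] Polynomial R)

lemma coeff_aeval_C_mul_X (a : σ → R) (F : MvPolynomial σ R) (n : ℕ) :
    (aeval (fun j => Polynomial.C (a j) * Polynomial.X) F).coeff n =
      eval a (homogeneousComponent n F) := by
  induction F using MvPolynomial.induction_on' with
  | add F G hF hG => simp only [map_add, Polynomial.coeff_add, hF, hG]
  | monomial s r =>
    rw [homogeneousComponent_of_mem (isHomogeneous_monomial r rfl), aeval_monomial, Finsupp.prod]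
    simp only [mul_pow, Finset.prod_mul_distrib, Finset.prod_pow_eq_pow_sum, ← map_pow, ← map_prod,
      Polynomial.algebraMap_eq, ← Finsupp.degree_apply, ← mul_assoc, ← map_mul,
      Polynomial.coeff_C_mul_X_pow]
    split_ifs <;> simp [eval_monomial, Finsupp.prod]

lemma mem_pointIdeal {a : σ → R} {F : MvPolynomial σ R} :
    F ∈ pointIdeal a ↔ ∀ n, eval a (homogeneousComponent n F) = 0 := by
  simp only [pointIdeal, RingHom.mem_ker, Polynomial.ext_iff, Polynomial.coeff_zero,
    coeff_aeval_C_mul_X]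

lemma mem_pointIdeal_of_isHomogeneous {a : σ → R} {F : MvPolynomial σ R} {n : ℕ}
    (hF : F.IsHomogeneous n) : F ∈ pointIdeal a ↔ eval a F = 0 := by
  simp only [mem_pointIdeal, homogeneousComponent_of_mem hF, apply_ite (eval a), map_zero,
    ite_eq_right_iff, forall_eq]

lemma isPrime_pointIdeal [IsDomain R] (a : σ → R) : (pointIdeal a).IsPrime :=
  RingHom.ker_isPrime _

lemma pointIdeal_le {a : σ → R} {J : Ideal (MvPolynomial σ R)} {t : MvPolynomial σ R}
    (h : ∀ j, X j - C (a j) * t ∈ J) : pointIdeal a ≤ J := by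
  have hmk : Ideal.Quotient.mkₐ R J = ((Ideal.Quotient.mkₐ R J).comp (Polynomial.aeval t)).comp
      (aeval fun j => Polynomial.C (a j) * Polynomial.X) := by
    ext j
    simpa [Polynomial.aeval_def] using Ideal.Quotient.eq.2 (h j)
  intro F hF
  rw [pointIdeal, RingHom.mem_ker] at hF
  rw [← Ideal.Quotient.eq_zero_iff_mem, ← Ideal.Quotient.mkₐ_eq_mk R, hmk, AlgHom.comp_apply,
    hF, map_zero]

end PointIdeals

section LinearSubst

variable {σ τ R : Type*} [CommRing R] [Fintype σ] [Fintype τ] [DecidableEq σ] [DecidableEq τ]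

/-- The graded isomorphism `F ↦ F ∘ e` of coordinate rings induced by a linear change of
coordinates `e`. -/
noncomputable def linearSubst (e : (σ → R) ≃ₗ[R] (τ → R)) :
    MvPolynomial τ R ≃ₐ[R] MvPolynomial σ R :=
  AlgEquiv.ofAlgHom (bind₁ (LinearMap.toMatrix' e.toLinearMap).toMvPolynomial)
    (bind₁ (LinearMap.toMatrix' e.symm.toLinearMap).toMvPolynomial)
    (by ext i; simp [← Matrix.toMvPolynomial_mul, ← LinearMap.toMatrix'_comp])
    (by ext i; simp [← Matrix.toMvPolynomial_mul, ← LinearMap.toMatrix'_comp])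

lemma isHomogeneous_linearSubst (e : (σ → R) ≃ₗ[R] (τ → R)) {F : MvPolynomial τ R} {n : ℕ}
    (hF : F.IsHomogeneous n) : (linearSubst e F).IsHomogeneous n :=
  one_mul n ▸ hF.aeval _ (Matrix.toMvPolynomial_isHomogeneous _)

lemma comap_linearSubst_pointIdeal (e : (σ → R) ≃ₗ[R] (τ → R)) (a : σ → R) :
    (pointIdeal a).comap (linearSubst e) = pointIdeal (e a) := by
  have hcomp : (aeval fun j => Polynomial.C (a j) * Polynomial.X).comp (linearSubst e).toAlgHom =
      aeval fun i => Polynomial.C (e a i) * Polynomial.X := by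
    ext i : 1
    have hea := congrFun (LinearMap.toMatrix'_mulVec e.toLinearMap a) i
    simp only [Matrix.mulVec, dotProduct, LinearEquiv.coe_coe] at hea
    simp [linearSubst, Matrix.toMvPolynomial, aeval_monomial, ← hea, Finset.sum_mul, mul_assoc]
  rw [pointIdeal, pointIdeal, ← hcomp]
  rfl

lemma NoNewGenerator.of_comap_linearSubst (e : (σ → R) ≃ₗ[R] (τ → R))
    {J : Ideal (MvPolynomial σ R)} {d : ℕ} (h : NoNewGenerator (J.comap (linearSubst e)) d) :
    NoNewGenerator J d := by
  rintro F ⟨hFJ, hF⟩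
  have hle : homogeneousSubmodule τ R 1 * gradedPiece (J.comap (linearSubst e)) d ≤
      (homogeneousSubmodule σ R 1 * gradedPiece J d).comap (linearSubst e).toLinearMap :=
    Submodule.mul_le.2 fun f hf g hg => by
      rw [Submodule.mem_comap, AlgEquiv.toLinearMap_apply, map_mul]
      exact Submodule.mul_mem_mul (isHomogeneous_linearSubst e hf)
        ⟨hg.1, isHomogeneous_linearSubst e hg.2⟩
  have hF' : (linearSubst e).symm F ∈ gradedPiece (J.comap (linearSubst e)) (d + 1) :=
    ⟨by simpa using hFJ, isHomogeneous_linearSubst e.symm hF⟩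
  simpa using hle (h hF')

end LinearSubst

section PowersOfIdeals

lemma comap_pow_of_equiv {A B : Type*} [CommRing A] [CommRing B] (e : A ≃+* B) (J : Ideal B)
    (m : ℕ) : (J ^ m).comap e = J.comap e ^ m := by
  rw [← Ideal.map_symm, ← Ideal.map_symm, Ideal.map_pow]

lemma mem_comap_constantCoeff_pow_iff {A : Type*} [CommRing A] {J : Ideal A} {m : ℕ}
    {f : Polynomial A} :
    f ∈ J.comap Polynomial.constantCoeff ^ m ↔ ∀ k, f.coeff k ∈ J ^ (m - k) := by
  constructor
  · intro hf
    induction m generalizing f with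
    | zero => simp
    | succ m ih =>
      rw [pow_succ] at hf
      induction hf using Submodule.mul_induction_on' with
      | mem_mul_mem g hg h hh =>
        intro k
        rw [Polynomial.coeff_mul]
        refine Ideal.sum_mem _ fun ⟨i, j⟩ hij => ?_
        rw [Finset.HasAntidiagonal.mem_antidiagonal] at hij
        have hj : h.coeff j ∈ J ^ (1 - j) := by
          obtain _ | j := j
          · simpa using hh
          · simp
        refine Ideal.pow_le_pow_right (?_ : _ ≤ (m - i) + (1 - j)) ?_
        · lia
        · exact pow_add J _ _ ▸ Ideal.mul_mem_mul (ih hg i) hj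
      | add g _ h _ hg hh =>
        exact fun k => Polynomial.coeff_add g h k ▸ Ideal.add_mem _ (hg k) (hh k)
  · intro hf
    have hC : J.map Polynomial.C ≤ J.comap Polynomial.constantCoeff :=
      Ideal.map_le_iff_le_comap.2 fun r hr => by simpa using hr
    have hX : (Polynomial.X : Polynomial A) ∈ J.comap Polynomial.constantCoeff := by simp
    rw [f.as_sum_range_C_mul_X_pow]
    refine Ideal.sum_mem _ fun k _ => Ideal.pow_le_pow_right (?_ : _ ≤ (m - k) + k) ?_
    · lia
    · rw [pow_add]
      refine Ideal.mul_mem_mul (Ideal.pow_right_mono hC _ ?_) (Ideal.pow_mem_pow hX k)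
      exact Ideal.map_pow Polynomial.C J _ ▸ Ideal.mem_map_of_mem Polynomial.C (hf k)

end PowersOfIdeals

section Cone

variable {n : ℕ} {R : Type*} [CommRing R]

lemma finSuccEquiv_rename_succ (g : MvPolynomial (Fin n) R) :
    finSuccEquiv R n (rename Fin.succ g) = Polynomial.C g := by
  have h : (finSuccEquiv R n).toAlgHom.comp (rename Fin.succ) = Polynomial.CAlgHom := by
    ext j : 1
    simp [finSuccEquiv_X_succ]
  exact DFunLike.congr_fun h g

lemma finSuccEquiv_X_zero_pow_mul_rename_succ (k : ℕ) (g : MvPolynomial (Fin n) R) :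
    finSuccEquiv R n (X 0 ^ k * rename Fin.succ g) = Polynomial.monomial k g := by
  rw [map_mul, map_pow, finSuccEquiv_X_zero, finSuccEquiv_rename_succ, mul_comm,
    Polynomial.C_mul_X_pow_eq_monomial]

lemma sum_X_zero_pow_mul_coeff_finSuccEquiv (F : MvPolynomial (Fin (n + 1)) R) :
    ∑ k ∈ Finset.range (F.degreeOf 0 + 1),
      X 0 ^ k * rename Fin.succ ((finSuccEquiv R n F).coeff k) = F := by
  apply (finSuccEquiv R n).injective
  simp only [map_sum, finSuccEquiv_X_zero_pow_mul_rename_succ, ← natDegree_finSuccEquiv]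
  exact (Polynomial.as_sum_range _).symm

lemma pointIdeal_cons_zero (a : Fin n → R) :
    pointIdeal (Fin.cons 0 a) =
      ((pointIdeal a).comap Polynomial.constantCoeff).comap (finSuccEquiv R n).toRingEquiv := by
  have h : (aeval fun j => Polynomial.C ((Fin.cons 0 a : Fin (n + 1) → R) j) * Polynomial.X :
      MvPolynomial (Fin (n + 1)) R →ₐ[R] Polynomial R) =
      ((aeval fun j => Polynomial.C (a j) * Polynomial.X).comp
        ((Polynomial.aeval 0).restrictScalars R)).comp (finSuccEquiv R n).toAlgHom := by
    ext j : 1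
    refine Fin.cases ?_ (fun j => ?_) j <;> simp [finSuccEquiv_X_zero, finSuccEquiv_X_succ]
  ext F
  simp [pointIdeal, h, RingHom.mem_ker, Polynomial.coeff_zero_eq_aeval_zero]

lemma pointIdeal_cons_one_zero :
    pointIdeal (Fin.cons 1 0 : Fin (n + 1) → R) =
      ((idealOfVars (Fin n) R).map Polynomial.C).comap (finSuccEquiv R n).toRingEquiv := by
  apply le_antisymm
  · refine pointIdeal_le (t := X 0) fun j => ?_
    refine Fin.cases ?_ (fun j => ?_) j
    · simp
    · have hX : (X j : MvPolynomial (Fin n) R) ∈ idealOfVars (Fin n) R :=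
        Ideal.subset_span ⟨j, rfl⟩
      simpa [finSuccEquiv_X_succ] using Ideal.mem_map_of_mem Polynomial.C hX
  · rw [← Ideal.map_symm, Ideal.map_le_iff_le_comap, Ideal.map_le_iff_le_comap, idealOfVars,
      Ideal.span_le]
    rintro _ ⟨j, rfl⟩
    have hX : (finSuccEquiv R n).toRingEquiv.symm (Polynomial.C (X j)) = X j.succ :=
      (finSuccEquiv R n).toRingEquiv.symm_apply_eq.2 finSuccEquiv_X_succ.symm
    change (finSuccEquiv R n).toRingEquiv.symm (Polynomial.C (X j)) ∈ pointIdeal _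
    rw [hX, mem_pointIdeal_of_isHomogeneous (isHomogeneous_X R _), eval_X, Fin.cons_succ,
      Pi.zero_apply]

lemma mem_pointIdeal_cons_zero_pow_iff {a : Fin n → R} {F : MvPolynomial (Fin (n + 1)) R} {m : ℕ} :
    F ∈ pointIdeal (Fin.cons 0 a) ^ m ↔
      ∀ k, (finSuccEquiv R n F).coeff k ∈ pointIdeal a ^ (m - k) := by
  rw [pointIdeal_cons_zero, ← comap_pow_of_equiv, Ideal.mem_comap]
  exact mem_comap_constantCoeff_pow_iff

lemma mem_pointIdeal_cons_one_zero_pow_iff {F : MvPolynomial (Fin (n + 1)) R} {m : ℕ} :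
    F ∈ pointIdeal (Fin.cons 1 0) ^ m ↔
      ∀ k, (finSuccEquiv R n F).coeff k ∈ idealOfVars (Fin n) R ^ m := by
  rw [pointIdeal_cons_one_zero, ← comap_pow_of_equiv, ← Ideal.map_pow, Ideal.mem_comap]
  exact Ideal.mem_map_C_iff

variable {I : Ideal (MvPolynomial (Fin (n + 1)) R)} {J : ℕ → Ideal (MvPolynomial (Fin n) R)}
  {s m d : ℕ}

lemma X_zero_pow_mul_rename_succ_mem_gradedPiece
    (hI : ∀ F, F ∈ I ↔ ∀ k, (finSuccEquiv R n F).coeff k ∈ J (m - k) ⊓ idealOfVars (Fin n) R ^ m)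
    {k c : ℕ} {g : MvPolynomial (Fin n) R} (hgJ : g ∈ J (m - k))
    (hgm : g ∈ idealOfVars (Fin n) R ^ m) (hg : g.IsHomogeneous c) :
    X 0 ^ k * rename Fin.succ g ∈ gradedPiece I (k + c) := by
  refine ⟨(hI _).2 fun j => ?_, (isHomogeneous_X_pow 0 k).mul hg.rename_isHomogeneous⟩
  rw [finSuccEquiv_X_zero_pow_mul_rename_succ, Polynomial.coeff_monomial]
  split_ifs with hkj
  · exact hkj ▸ ⟨hgJ, hgm⟩
  · exact zero_mem _

lemma X_zero_pow_mul_rename_succ_mem_mul_gradedPiece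
    (hI : ∀ F, F ∈ I ↔ ∀ k, (finSuccEquiv R n F).coeff k ∈ J (m - k) ⊓ idealOfVars (Fin n) R ^ m)
    {k c : ℕ} {g : MvPolynomial (Fin n) R} (hmc : m ≤ c)
    (hg : g ∈ homogeneousSubmodule (Fin n) R 1 * gradedPiece (J (m - k)) c) :
    X 0 ^ k * rename Fin.succ g ∈
      homogeneousSubmodule (Fin (n + 1)) R 1 * gradedPiece I (k + c) := by
  have hle : homogeneousSubmodule (Fin n) R 1 * gradedPiece (J (m - k)) c ≤
      (homogeneousSubmodule (Fin (n + 1)) R 1 * gradedPiece I (k + c)).comap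
        (LinearMap.mulLeft R (X 0 ^ k) ∘ₗ (rename Fin.succ).toLinearMap) :=
    Submodule.mul_le.2 fun u hu v hv => by
      rw [Submodule.mem_comap, LinearMap.comp_apply, AlgHom.toLinearMap_apply,
        LinearMap.mulLeft_apply, map_mul, mul_left_comm]
      exact Submodule.mul_mem_mul hu.rename_isHomogeneous
        (X_zero_pow_mul_rename_succ_mem_gradedPiece hI hv.1
          (mem_pow_idealOfVars_of_isHomogeneous hv.2 hmc) hv.2)
  exact hle hg

lemma noNewGenerator_of_coeff_finSuccEquiv_mem
    (hI : ∀ F, F ∈ I ↔ ∀ k, (finSuccEquiv R n F).coeff k ∈ J (m - k) ⊓ idealOfVars (Fin n) R ^ m)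
    (hJ : ∀ e c, s * e ≤ c → NoNewGenerator (J e) c) (hs : 2 ≤ s) (hd : s * m ≤ d) :
    NoNewGenerator I d := by
  rintro F ⟨hFI, hF⟩
  rw [← sum_X_zero_pow_mul_coeff_finSuccEquiv F]
  refine Submodule.sum_mem _ fun k hk => ?_
  obtain ⟨hgJ, hgm⟩ := (hI F).1 hFI k
  have hkd : k ≤ d + 1 := by
    have := (degreeOf_le_totalDegree F 0).trans hF.totalDegree_le
    have := Finset.mem_range.1 hk
    lia
  have hg := hF.finSuccEquiv_coeff_isHomogeneous k (d + 1 - k) (by lia)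
  generalize (finSuccEquiv R n F).coeff k = g at *
  rcases lt_or_ge m k with hmk | hkm
  · obtain ⟨k, rfl⟩ := Nat.exists_eq_add_one_of_ne_zero (Nat.ne_zero_of_lt hmk)
    rw [show m - (k + 1) = m - k by lia] at hgJ
    rw [pow_succ', mul_assoc, show d = k + (d + 1 - (k + 1)) by lia]
    exact Submodule.mul_mem_mul (isHomogeneous_X _ _)
      (X_zero_pow_mul_rename_succ_mem_gradedPiece hI hgJ hgm (by simpa using hg))
  · have hmd : m + m ≤ d := by nlinarith
    obtain ⟨c, rfl⟩ := Nat.exists_eq_add_of_le (show k ≤ d by lia)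
    have hsc : s * (m - k) ≤ c := by
      obtain ⟨e, rfl⟩ := Nat.exists_eq_add_of_le hkm
      rw [Nat.add_sub_cancel_left]
      nlinarith
    rw [show k + c + 1 - k = c + 1 by lia] at hg
    exact X_zero_pow_mul_rename_succ_mem_mul_gradedPiece hI (by lia) (hJ _ _ hsc ⟨hgJ, hg⟩)

end Cone

section Plane

/-- The linear form `a₁ X₀ - a₀ X₁` in two variables whose zero locus is the line spanned by `a`. -/
noncomputable def lineForm {R : Type*} [CommRing R] (a : Fin 2 → R) : MvPolynomial (Fin 2) R :=
  C (a 1) * X 0 - C (a 0) * X 1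

lemma isHomogeneous_lineForm {R : Type*} [CommRing R] (a : Fin 2 → R) :
    (lineForm a).IsHomogeneous 1 :=
  (isHomogeneous_C_mul_X _ _).sub (isHomogeneous_C_mul_X _ _)

lemma pointIdeal_eq_span_lineForm {R : Type*} [CommRing R] {a : Fin 2 → R}
    (ha : IsCoprime (a 0) (a 1)) : pointIdeal a = Ideal.span {lineForm a} := by
  apply le_antisymm
  · obtain ⟨u, v, huv⟩ := ha
    have huv' : C u * C (a 0) + C v * C (a 1) = (1 : MvPolynomial (Fin 2) R) := by
      rw [← C_mul, ← C_mul, ← C_add, huv, C_1]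
    refine pointIdeal_le (t := C u * X 0 + C v * X 1) (Fin.forall_fin_two.2 ⟨?_, ?_⟩) <;>
      rw [Ideal.mem_span_singleton']
    · exact ⟨C v, by rw [lineForm]; linear_combination X 0 * huv'⟩
    · exact ⟨-C u, by rw [lineForm]; linear_combination X 1 * huv'⟩
  · rw [Ideal.span_singleton_le_iff_mem,
      mem_pointIdeal_of_isHomogeneous (isHomogeneous_lineForm a)]
    simp [lineForm, mul_comm]

variable {K : Type*} [Field K]

lemma isCoprime_coords_of_ne_zero {a : Fin 2 → K} (ha : a ≠ 0) : IsCoprime (a 0) (a 1) := by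
  rw [Semifield.isCoprime_iff]
  contrapose! ha
  exact _root_.funext (Fin.forall_fin_two.2 ha)

lemma prime_lineForm {a : Fin 2 → K} (ha : a ≠ 0) : Prime (lineForm a) := by
  have hne : lineForm a ≠ 0 := fun h => ha <| _root_.funext <| Fin.forall_fin_two.2
    ⟨by simpa [lineForm] using congrArg (eval ![0, 1]) h,
      by simpa [lineForm] using congrArg (eval ![1, 0]) h⟩
  rw [← Ideal.span_singleton_prime hne,
    ← pointIdeal_eq_span_lineForm (isCoprime_coords_of_ne_zero ha)]
  exact isPrime_pointIdeal a

lemma isRelPrime_lineForm {a b : Fin 2 → K} (ha : a ≠ 0) (hab : ∀ c : K, c • a ≠ b) :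
    IsRelPrime (lineForm a) (lineForm b) := by
  rw [(prime_lineForm ha).irreducible.isRelPrime_iff_not_dvd, ← Ideal.mem_span_singleton,
    ← pointIdeal_eq_span_lineForm (isCoprime_coords_of_ne_zero ha),
    mem_pointIdeal_of_isHomogeneous (isHomogeneous_lineForm b)]
  intro hdet
  obtain ⟨u, v, huv⟩ := isCoprime_coords_of_ne_zero ha
  simp only [lineForm, map_sub, map_mul, eval_C, eval_X] at hdet
  refine hab (u * b 0 + v * b 1) (_root_.funext (Fin.forall_fin_two.2 ⟨?_, ?_⟩)) <;>
    rw [Pi.smul_apply, smul_eq_mul]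
  · linear_combination b 0 * huv + v * hdet
  · linear_combination b 1 * huv - u * hdet

variable {ι : Type*} [Fintype ι] {a : ι → Fin 2 → K}

lemma iInf_pointIdeal_pow_eq_span (ha : ∀ i, a i ≠ 0)
    (hdist : Pairwise fun i j => ∀ c : K, c • a i ≠ a j) (e : ℕ) :
    ⨅ i, pointIdeal (a i) ^ e = Ideal.span {(∏ i, lineForm (a i)) ^ e} := by
  ext F
  simp only [Ideal.mem_iInf, pointIdeal_eq_span_lineForm (isCoprime_coords_of_ne_zero (ha _)),
    Ideal.span_singleton_pow, Ideal.mem_span_singleton, ← Finset.prod_pow]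
  refine ⟨Fintype.prod_dvd_of_isRelPrime fun i j hij => ?_, fun hF i => ?_⟩
  · exact (isRelPrime_lineForm (ha i) (hdist hij)).pow
  · exact (Finset.dvd_prod_of_mem _ (Finset.mem_univ i)).trans hF

lemma noNewGenerator_iInf_pointIdeal_pow (ha : ∀ i, a i ≠ 0)
    (hdist : Pairwise fun i j => ∀ c : K, c • a i ≠ a j) {e d : ℕ} (hd : Fintype.card ι * e ≤ d) :
    NoNewGenerator (⨅ i, pointIdeal (a i) ^ e) d := by
  rw [iInf_pointIdeal_pow_eq_span ha hdist]
  refine noNewGenerator_span_singleton (IsHomogeneous.pow ?_ e) hd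
  simpa using IsHomogeneous.prod Finset.univ _ _ fun i _ => isHomogeneous_lineForm (a i)

lemma noNewGenerator_fatPoints_cons (ha : ∀ i, a i ≠ 0)
    (hdist : Pairwise fun i j => ∀ c : K, c • a i ≠ a j) (hcard : 2 ≤ Fintype.card ι) {m d : ℕ}
    (hd : Fintype.card ι * m ≤ d) :
    NoNewGenerator
      ((⨅ i, pointIdeal (Fin.cons 0 (a i) : Fin 3 → K) ^ m) ⊓ pointIdeal (Fin.cons 1 0) ^ m) d := by
  refine noNewGenerator_of_coeff_finSuccEquiv_mem (J := fun e => ⨅ i, pointIdeal (a i) ^ e)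
    (fun F => ?_) (fun e c => noNewGenerator_iInf_pointIdeal_pow ha hdist) hcard hd
  simp only [Ideal.mem_inf, Ideal.mem_iInf, mem_pointIdeal_cons_zero_pow_iff,
    mem_pointIdeal_cons_one_zero_pow_iff, forall_and]
  rw [forall_comm]

end Plane

section FatPoints

variable {K : Type*} [Field K]

lemma exists_linearEquiv_apply_eq_cons {n : ℕ} (φ : Module.Dual K (Fin (n + 1) → K))
    {q : Fin (n + 1) → K} (hq : φ q ≠ 0) :
    ∃ T : (Fin (n + 1) → K) ≃ₗ[K] (Fin (n + 1) → K),
      T q = Fin.cons 1 0 ∧ ∀ v, φ v = φ q * T v 0 := by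
  have hker : Module.finrank K (LinearMap.ker φ) = n := by
    have hφ : φ ≠ 0 := fun h => hq (by rw [h, LinearMap.zero_apply])
    simpa using Module.Dual.finrank_ker_add_one_of_ne_zero hφ
  let b := Module.Basis.mkFinCons q (Module.finBasisOfFinrankEq K _ hker)
    (fun c x hx hcx => by simpa [LinearMap.mem_ker.1 hx, hq] using congrArg φ hcx)
    (fun z => ⟨-(φ z / φ q), by simp [hq]⟩)
  have hb_zero : b 0 = q := by simp [b]
  have hb_succ (j : Fin n) : φ (b j.succ) = 0 := by simp [b]
  have hq_repr : b.repr q = Finsupp.single 0 1 := by rw [← hb_zero, b.repr_self]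
  have hφb : φ = φ q • b.coord 0 := b.ext <| Fin.cases (by simp [hb_zero, hq_repr]) fun j => by
    simp [hb_succ]
  refine ⟨b.equivFun, ?_, fun v => congrArg (· v) hφb⟩
  exact _root_.funext (Fin.cases (by simp [hq_repr]) fun j => by simp [hq_repr])

theorem noNewGenerator_fatPoints {ι : Type*} [Fintype ι] {a : ι → Fin 3 → K} (ha : ∀ i, a i ≠ 0)
    (hdist : Pairwise fun i j => ∀ c : K, c • a i ≠ a j) {φ : Module.Dual K (Fin 3 → K)}
    (hon : ∀ i, φ (a i) = 0) {q : Fin 3 → K} (hoff : φ q ≠ 0) (hcard : 2 ≤ Fintype.card ι)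
    {m d : ℕ} (hd : Fintype.card ι * m ≤ d) :
    NoNewGenerator ((⨅ i, pointIdeal (a i) ^ m) ⊓ pointIdeal q ^ m) d := by
  obtain ⟨T, hTq, hT⟩ := exists_linearEquiv_apply_eq_cons φ hoff
  have hTa (i : ι) : T (a i) = Fin.cons 0 (Fin.tail (T (a i))) := by
    have hTa0 : T (a i) 0 = 0 := by simpa [hon, hoff] using hT (a i)
    rw [← hTa0, Fin.cons_self_tail]
  have htail_ne (i : ι) : Fin.tail (T (a i)) ≠ 0 := fun h => ha i <| T.injective <| by
    rw [hTa, h, map_zero]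
    exact Matrix.cons_zero_zero
  have htail_dist : Pairwise fun i j => ∀ c : K, c • Fin.tail (T (a i)) ≠ Fin.tail (T (a j)) :=
    fun i j hij c h => hdist hij c <| T.injective <| by
      rw [map_smul, hTa i, hTa j, ← h]
      exact _root_.funext (Fin.cases (by simp) fun j => by simp)
  refine .of_comap_linearSubst T ?_
  have hcomap (v : Fin 3 → K) :
      (pointIdeal v ^ m).comap (linearSubst T) = pointIdeal (T v) ^ m := by
    rw [← comap_linearSubst_pointIdeal]
    exact comap_pow_of_equiv (linearSubst T).toRingEquiv _ _
  simp only [Ideal.comap_inf, Ideal.comap_iInf, hcomap, hTq, fun i => congrArg pointIdeal (hTa i)]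
  exact noNewGenerator_fatPoints_cons htail_ne htail_dist hcard hd

end FatPoints

section MinimalGenerators

variable {K : Type*} [Field K] {J : Ideal (MvPolynomial (Fin 3) K)} {d : ℕ}

lemma oneGen_succ (J : Ideal (MvPolynomial (Fin 3) K)) (d : ℕ) :
    oneGen J (d + 1) = homogeneousSubmodule (Fin 3) K 1 * gradedPiece J d := by
  rw [oneGen, Submodule.mul_eq_span_mul_set]
  congr 1
  ext x
  simp [Set.mem_mul, gradedPiece, degComp, eq_comm]

lemma NoNewGenerator.degComp_eq_oneGen (h : NoNewGenerator J d) :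
    degComp J (d + 1) = oneGen J (d + 1) := by
  rw [oneGen_succ]
  exact h.antisymm (homogeneousSubmodule_one_mul_gradedPiece_le J d)

lemma vnum_eq_zero_of_degComp_eq_oneGen (h : degComp J d = oneGen J d) : vnum J d = 0 := by
  rw [vnum, ← h, Submodule.comap_subtype_self]
  exact Module.finrank_zero_of_subsingleton

end MinimalGenerators

theorem stmt_8_general
    (K : Type*) [Field K]
    (l : ℕ) (hl : 2 ≤ l)
    (p : Fin (l + 1) → Fin 3 → K) (hp0 : ∀ i, p i ≠ 0)
    (hdist : ∀ i j, i ≠ j → ∀ c : K, c • p i ≠ p j)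
    (L : Fin 3 → K)
    (hon : ∀ i : Fin (l + 1), (i : ℕ) < l → ∑ j, L j * p i j = 0)
    (hoff : ∑ j, L j * p (Fin.last l) j ≠ 0)
    (P : Fin (l + 1) → Ideal (MvPolynomial (Fin 3) K))
    (hP : ∀ i F, F ∈ P i ↔ ∀ n, eval (p i) (homogeneousComponent n F) = 0)
    (m : ℕ)
    (Im : Ideal (MvPolynomial (Fin 3) K)) (hIm : Im = ⨅ i, P i ^ m) :
    (∀ d : ℕ, l * m ≤ d → degComp Im (d + 1) = oneGen Im (d + 1)) ∧
    (∀ d : ℕ, l * m < d → vnum Im d = 0) := by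
  have hPp (i : Fin (l + 1)) : P i = pointIdeal (p i) := Ideal.ext fun F => by
    rw [hP, mem_pointIdeal]
  have hI : Im =
      (⨅ i : Fin l, pointIdeal (p i.castSucc) ^ m) ⊓ pointIdeal (p (Fin.last l)) ^ m := by
    ext F
    simp only [hIm, hPp, Ideal.mem_inf, Ideal.mem_iInf, Fin.forall_fin_succ']
  have hgen (d : ℕ) (hd : l * m ≤ d) : degComp Im (d + 1) = oneGen Im (d + 1) := by
    rw [hI]
    exact (noNewGenerator_fatPoints (φ := dotProductEquiv K (Fin 3) L) (fun i => hp0 _)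
      (fun i j hij => hdist _ _ ((Fin.castSucc_injective l).ne hij)) (fun i => hon _ i.2) hoff
      (by rwa [Fintype.card_fin]) (by rwa [Fintype.card_fin])).degComp_eq_oneGen
  refine ⟨hgen, fun d hd => ?_⟩
  obtain ⟨d, rfl⟩ := Nat.exists_eq_add_one_of_ne_zero (Nat.ne_zero_of_lt hd)
  exact vnum_eq_zero_of_degComp_eq_oneGen (hgen d (Nat.le_of_lt_succ hd))

theorem stmt_8
    (K : Type*) [Field K] [CharZero K]
    -- `l > 2` points on a line plus one point off the line
    (l : ℕ) (hl : 2 < l)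
    (p : Fin (l + 1) → Fin 3 → K) (hp0 : ∀ i, p i ≠ 0)
    (hdist : ∀ i j, i ≠ j → ∀ c : K, c • p i ≠ p j)
    (L : Fin 3 → K) (hL : L ≠ 0)
    (hon : ∀ i : Fin (l + 1), (i : ℕ) < l → ∑ j, L j * p i j = 0)
    (hoff : ∑ j, L j * p (Fin.last l) j ≠ 0)
    -- `P i` is the homogeneous prime ideal of all forms vanishing at `p i`
    (P : Fin (l + 1) → Ideal (MvPolynomial (Fin 3) K))
    (hP : ∀ i F, F ∈ P i ↔ ∀ n, eval (p i) (homogeneousComponent n F) = 0)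
    -- the uniform fat point ideal `I^{(m)} = P_1^m ∩ ⋯ ∩ P_{l+1}^m`
    (m : ℕ) (hm : 1 ≤ m)
    (Im : Ideal (MvPolynomial (Fin 3) K)) (hIm : Im = ⨅ i, P i ^ m) :
    -- `(I^{(m)})_{d+1} = R_1 · (I^{(m)})_d` for all `d ≥ lm`
    (∀ d : ℕ, l * m ≤ d → degComp Im (d + 1) = oneGen Im (d + 1)) ∧
    -- i.e. `v_d(I^{(m)}) = 0` for all `d > lm`
    (∀ d : ℕ, l * m < d → vnum Im d = 0) :=
  stmt_8_general K l hl.le p hp0 hdist L hon hoff P hP m Im hIm
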